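/- arXiv:1708.02521 — 3 statements merged into one kernel-verified Lean document; each statement's English description precedes it below -/
import Mathlib

section
/- Let g : E → ℝ be twice Fréchet differentiable and suppose that sup_{w∈E} |g(w)|/(1+‖w‖³) < ∞ and that there is a constant k_g with ‖D²g(w+h) − D²g(w)‖ ≤ k_g‖h‖ for all w,h ∈ E. Then sup_{w∈E} ‖Dg(w)‖/(1+‖w‖²) < ∞ and sup_{w∈E} ‖D²g(w)‖/(1+‖w‖) < ∞; in particular ‖g‖_M < ∞. -/
/-! The Lipschitz bound, taken between `0` and `w`, gives linear growth of `D²g`. By the mean value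
inequality on the ball of radius `‖w‖`, a function whose derivative has growth of order `n` has
growth of order `n + 1`, so `Dg` grows at most quadratically. -/

theorem norm_le_of_norm_sub_le_mul {F : Type*} [SeminormedAddCommGroup F] {a b : F} {K t : ℝ}
    (ht : 1 ≤ t) (hab : ‖a - b‖ ≤ K * t) : ‖a‖ ≤ (‖b‖ + K) * t :=
  calc
    ‖a‖ ≤ ‖b‖ + ‖a - b‖ := norm_le_norm_add_norm_sub' a b
    _ ≤ ‖b‖ * t + K * t := add_le_add (le_mul_of_one_le_right (norm_nonneg b) ht) hab
    _ = (‖b‖ + K) * t := by ring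

theorem norm_le_mul_one_add_norm_of_lipschitzWith {E F : Type*} [SeminormedAddCommGroup E]
    [SeminormedAddCommGroup F] {f : E → F} {K : NNReal} (hf : LipschitzWith K f) (w : E) :
    ‖f w‖ ≤ (‖f 0‖ + K) * (1 + ‖w‖) := by
  refine norm_le_of_norm_sub_le_mul (le_add_of_nonneg_right (norm_nonneg w)) ?_
  calc
    ‖f w - f 0‖ ≤ K * ‖w‖ := by simpa only [sub_zero] using hf.norm_sub_le w 0
    _ ≤ K * (1 + ‖w‖) := by gcongr; exact le_add_of_nonneg_left zero_le_one

theorem one_add_pow_mul_self_le {r : ℝ} (hr : 0 ≤ r) (n : ℕ) :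
    (1 + r ^ n) * r ≤ 2 * (1 + r ^ (n + 1)) := by
  have self_le : r ≤ 1 + r ^ (n + 1) := by
    rcases le_total r 1 with hr_le | hr_ge
    · exact hr_le.trans (le_add_of_nonneg_right (pow_nonneg hr _))
    · exact (le_self_pow₀ hr_ge n.succ_ne_zero).trans (le_add_of_nonneg_left zero_le_one)
  calc
    (1 + r ^ n) * r = r + r ^ (n + 1) := by ring
    _ ≤ 2 * (1 + r ^ (n + 1)) := by linarith

theorem norm_le_mul_one_add_norm_pow_succ_of_norm_fderiv_le {𝕜 E F : Type*}
    [NontriviallyNormedField 𝕜] [IsRCLikeNormedField 𝕜] [NormedAddCommGroup E] [NormedSpace ℝ E]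
    [NormedSpace 𝕜 E] [NormedAddCommGroup F] [NormedSpace 𝕜 F] {f : E → F}
    (hf : Differentiable 𝕜 f) {C : ℝ} {n : ℕ} (hC : ∀ w, ‖fderiv 𝕜 f w‖ ≤ C * (1 + ‖w‖ ^ n))
    (w : E) : ‖f w‖ ≤ (‖f 0‖ + 2 * C) * (1 + ‖w‖ ^ (n + 1)) := by
  have C_nonneg : 0 ≤ C :=
    nonneg_of_mul_nonneg_left ((norm_nonneg _).trans (hC 0)) (by positivity)
  have fderiv_le : ∀ x ∈ Metric.closedBall (0 : E) ‖w‖, ‖fderiv 𝕜 f x‖ ≤ C * (1 + ‖w‖ ^ n) := by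
    intro x hx
    have norm_le : ‖x‖ ≤ ‖w‖ := mem_closedBall_zero_iff.mp hx
    exact (hC x).trans (by gcongr)
  refine norm_le_of_norm_sub_le_mul (le_add_of_nonneg_right (by positivity)) ?_
  calc
    ‖f w - f 0‖ ≤ C * (1 + ‖w‖ ^ n) * ‖w - 0‖ :=
      (convex_closedBall (0 : E) ‖w‖).norm_image_sub_le_of_norm_fderiv_le
        (fun x _ => hf x) fderiv_le (by simp) (by simp)
    _ = C * ((1 + ‖w‖ ^ n) * ‖w‖) := by rw [sub_zero, mul_assoc]
    _ ≤ C * (2 * (1 + ‖w‖ ^ (n + 1))) :=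
      mul_le_mul_of_nonneg_left (one_add_pow_mul_self_le (norm_nonneg w) n) C_nonneg
    _ = 2 * C * (1 + ‖w‖ ^ (n + 1)) := by ring

theorem stmt_0_general {E F : Type*} [NormedAddCommGroup E] [NormedSpace ℝ E]
    [NormedAddCommGroup F] [NormedSpace ℝ F] {g : E → F} (_hg₁ : Differentiable ℝ g)
    (hg₂ : Differentiable ℝ (fderiv ℝ g)) {K : NNReal}
    (hK : LipschitzWith K (fderiv ℝ (fderiv ℝ g))) :
    (∃ C₁ : ℝ, ∀ w : E, ‖fderiv ℝ g w‖ ≤ C₁ * (1 + ‖w‖ ^ 2)) ∧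
    (∃ C₂ : ℝ, ∀ w : E, ‖fderiv ℝ (fderiv ℝ g) w‖ ≤ C₂ * (1 + ‖w‖)) := by
  have second_le := norm_le_mul_one_add_norm_of_lipschitzWith hK
  have first_le := norm_le_mul_one_add_norm_pow_succ_of_norm_fderiv_le hg₂ (n := 1)
    (by simpa only [pow_one] using second_le)
  exact ⟨⟨_, first_le⟩, ⟨_, second_le⟩⟩

/-- Let `E` be a real Banach space and `g : E → ℝ` twice Fréchet
differentiable. If `sup_w |g w| / (1 + ‖w‖³) < ∞` and `‖D²g(w+h) − D²g(w)‖ ≤ k_g ‖h‖`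
for all `w, h`, then `sup_w ‖Dg w‖ / (1 + ‖w‖²) < ∞` and `sup_w ‖D²g w‖ / (1 + ‖w‖) < ∞`;
in particular `‖g‖_M < ∞`. -/
theorem stmt_0 {E : Type*} [NormedAddCommGroup E] [NormedSpace ℝ E] [CompleteSpace E]
    (g : E → ℝ)
    (hg₁ : Differentiable ℝ g)
    (hg₂ : Differentiable ℝ (fderiv ℝ g))
    (C₀ : ℝ) (hC₀ : ∀ w : E, |g w| ≤ C₀ * (1 + ‖w‖ ^ 3))
    (kg : ℝ)
    (hkg : ∀ w h : E,
      ‖fderiv ℝ (fderiv ℝ g) (w + h) - fderiv ℝ (fderiv ℝ g) w‖ ≤ kg * ‖h‖) :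
    (∃ C₁ : ℝ, ∀ w : E, ‖fderiv ℝ g w‖ ≤ C₁ * (1 + ‖w‖ ^ 2)) ∧
    (∃ C₂ : ℝ, ∀ w : E, ‖fderiv ℝ (fderiv ℝ g) w‖ ≤ C₂ * (1 + ‖w‖)) := by
  exact stmt_0_general hg₁ hg₂ <| .of_dist_le' fun x y => by
    simpa only [dist_eq_norm, add_sub_cancel] using hkg y (x - y)
end

section
/- Let f ∈ M. Then for every w ∈ E, lim_{u→0+} u^{−1}((T_u f)(w) − f(w)) = −Df(w)[w] + E[D²f(w)[D,D]]. (This identifies the action of the infinitesimal generator of the Ornstein–Uhlenbeck-type process with stationary law that of D on test functions in M.) -/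
open MeasureTheory ProbabilityTheory

/-!
Write the argument of `f` as `w + h`, where the increment `h = (e^{-u} - 1) w + σ(u) D` is of
order `√u`, and split `f (w + h) = f w + Df(w)[h] + R h`. Since `D` is centred, the linear term
contributes `u⁻¹ (e^{-u} - 1) Df(w)[w] → -Df(w)[w]`. For the remainder, Taylor's formula with Peano
remainder and `h / √u → √2 D` give `u⁻¹ R h → D²f(w)[D, D]` pointwise; growth of order `p` gives
`‖R h‖ ≤ C (‖h‖² + ‖h‖ ^ p)`, so `u⁻¹ R h` is dominated by an integrable function of `D`.
-/

open Filter Topology Asymptotics Set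

section Growth

variable {E F : Type*} [NormedAddCommGroup E] [NormedAddCommGroup F]

lemma isBigO_top_of_isBigO_nhds_zero {G : Type*} [NormedAddCommGroup G] {g : E → F} {k : E → G}
    (hnear : g =O[𝓝 0] k) (haway : ∀ δ > 0, g =O[𝓟 {h | δ ≤ ‖h‖}] k) : g =O[⊤] k := by
  obtain ⟨c, hc⟩ := hnear.bound
  obtain ⟨δ, hδ, hball⟩ := Metric.eventually_nhds_iff.1 hc
  have hball' : g =O[𝓟 {h | ‖h‖ < δ}] k :=
    isBigO_principal.2 ⟨c, fun h hh => hball (by simpa using hh)⟩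
  refine (hball'.sup (haway δ hδ)).mono ?_
  rw [sup_principal, ← principal_univ, principal_mono]
  exact fun h _ => lt_or_ge ‖h‖ δ

lemma norm_pow_isBigO_norm_pow_of_le {m n : ℕ} (hmn : m ≤ n) {δ : ℝ} (hδ : 0 < δ) :
    (fun h : E => ‖h‖ ^ m) =O[𝓟 {h | δ ≤ ‖h‖}] fun h => ‖h‖ ^ n := by
  refine isBigO_principal.2 ⟨(δ ^ (n - m))⁻¹, fun h (hh : δ ≤ ‖h‖) => ?_⟩
  rw [norm_pow, norm_pow, norm_norm, inv_mul_eq_div, le_div_iff₀ (by positivity)]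
  calc ‖h‖ ^ m * δ ^ (n - m) ≤ ‖h‖ ^ m * ‖h‖ ^ (n - m) := by gcongr
    _ = ‖h‖ ^ n := by rw [← pow_add, Nat.add_sub_cancel' hmn]

lemma comp_add_isBigO_one_add_norm_pow {f : E → F} {C : ℝ} {p : ℕ}
    (hgrowth : ∀ x, ‖f x‖ ≤ C * (1 + ‖x‖ ^ p)) (w : E) :
    (fun h => f (w + h)) =O[⊤] fun h => 1 + ‖h‖ ^ p := by
  have hC : 0 ≤ C := nonneg_of_mul_nonneg_left ((norm_nonneg _).trans (hgrowth 0)) (by positivity)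
  refine isBigO_top.2 ⟨C * (1 + 2 ^ (p - 1) * (‖w‖ ^ p + 1)), fun h => ?_⟩
  have hsum : ‖w + h‖ ^ p ≤ 2 ^ (p - 1) * (‖w‖ ^ p + ‖h‖ ^ p) :=
    (pow_le_pow_left₀ (norm_nonneg _) (norm_add_le w h) p).trans
      (add_pow_le (norm_nonneg w) (norm_nonneg h) p)
  have hcross : 0 ≤ 2 ^ (p - 1) * (‖w‖ ^ p * ‖h‖ ^ p) + 2 ^ (p - 1) + ‖h‖ ^ p := by positivity
  calc ‖f (w + h)‖ ≤ C * (1 + ‖w + h‖ ^ p) := hgrowth _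
    _ ≤ C * ((1 + 2 ^ (p - 1) * (‖w‖ ^ p + 1)) * (1 + ‖h‖ ^ p)) := by
        gcongr
        linear_combination hsum + hcross
    _ = _ := by rw [Real.norm_of_nonneg (by positivity), mul_assoc]

end Growth

section Taylor

variable {E F : Type*} [NormedAddCommGroup E] [NormedSpace ℝ E]
  [NormedAddCommGroup F] [NormedSpace ℝ F] {f : E → F} {w : E}

/-- The remainder of the first-order Taylor expansion of `f` at `w`, as a function of the
increment `h`. -/
noncomputable def linearRemainder (f : E → F) (w h : E) : F :=
  f (w + h) - f w - fderiv ℝ f w h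

lemma continuous_linearRemainder (hf : Continuous f) : Continuous (linearRemainder f w) := by
  unfold linearRemainder
  fun_prop

lemma norm_linearRemainder_sub_le_of_segment {B : E →L[ℝ] E →L[ℝ] F} {h : E} {c : ℝ}
    (hf : ∀ t ∈ Icc (0 : ℝ) 1, DifferentiableAt ℝ f (w + t • h))
    (hB : ∀ t ∈ Icc (0 : ℝ) 1, ‖fderiv ℝ f (w + t • h) - fderiv ℝ f w - B (t • h)‖ ≤ c) :
    ‖linearRemainder f w h - (1 / 2 : ℝ) • B h h‖ ≤ c * ‖h‖ := by
  have hderiv : ∀ t ∈ Icc (0 : ℝ) 1, HasDerivWithinAt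
      (fun t : ℝ => f (w + t • h) - t • fderiv ℝ f w h - (t ^ 2 / 2) • B h h)
      ((fderiv ℝ f (w + t • h) - fderiv ℝ f w - B (t • h)) h) (Icc 0 1) t := by
    intro t ht
    have hline : HasDerivAt (fun t : ℝ => w + t • h) h t := by
      simpa using ((hasDerivAt_id t).smul_const h).const_add w
    have hcomp := (hf t ht).hasFDerivAt.comp_hasDerivAt t hline
    have hlin := (hasDerivAt_id t).smul_const (fderiv ℝ f w h)
    have hquad := ((hasDerivAt_pow 2 t).div_const 2).smul_const (B h h)
    refine (((hcomp.sub hlin).sub hquad).congr_deriv ?_).hasDerivWithinAt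
    simp
  have hbound : ∀ t ∈ Ico (0 : ℝ) 1,
      ‖(fderiv ℝ f (w + t • h) - fderiv ℝ f w - B (t • h)) h‖ ≤ c * ‖h‖ := fun t ht =>
    ContinuousLinearMap.le_of_opNorm_le _ (hB t (Ico_subset_Icc_self ht)) h
  have hmvt := norm_image_sub_le_of_norm_deriv_le_segment_01' hderiv hbound
  convert hmvt using 2
  simp only [linearRemainder, one_smul, zero_smul, add_zero, one_pow, sub_zero,
    zero_pow two_ne_zero, zero_div]
  abel

theorem linearRemainder_sub_isLittleO (hf : ∀ᶠ x in 𝓝 w, DifferentiableAt ℝ f x)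
    (hf' : DifferentiableAt ℝ (fderiv ℝ f) w) :
    (fun h => linearRemainder f w h - (1 / 2 : ℝ) • fderiv ℝ (fderiv ℝ f) w h h)
      =o[𝓝 0] fun h => ‖h‖ ^ 2 := by
  refine isLittleO_iff.2 fun ε hε => ?_
  have hlin : ∀ᶠ x in 𝓝 w,
      ‖fderiv ℝ f x - fderiv ℝ f w - fderiv ℝ (fderiv ℝ f) w (x - w)‖ ≤ ε * ‖x - w‖ :=
    hf'.hasFDerivAt.isLittleO.def hε
  obtain ⟨δ, hδ, hball⟩ := Metric.eventually_nhds_iff.1 (hf.and hlin)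
  filter_upwards [Metric.ball_mem_nhds (0 : E) hδ] with h hh
  have hnorm : ∀ t ∈ Icc (0 : ℝ) 1, ‖t • h‖ ≤ ‖h‖ := fun t ht => by
    rw [norm_smul, Real.norm_of_nonneg ht.1]
    exact mul_le_of_le_one_left (norm_nonneg h) ht.2
  have hsegment : ∀ t ∈ Icc (0 : ℝ) 1, dist (w + t • h) w < δ := fun t ht => by
    rw [dist_self_add_left]
    exact (hnorm t ht).trans_lt (mem_ball_zero_iff.1 hh)
  have key : ‖linearRemainder f w h - (1 / 2 : ℝ) • fderiv ℝ (fderiv ℝ f) w h h‖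
      ≤ ε * ‖h‖ * ‖h‖ := by
    refine norm_linearRemainder_sub_le_of_segment (fun t ht => (hball (hsegment t ht)).1)
      fun t ht => ?_
    have hdiff := (hball (hsegment t ht)).2
    rw [add_sub_cancel_left] at hdiff
    exact hdiff.trans (by gcongr; exact hnorm t ht)
  rwa [norm_pow, norm_norm, sq, ← mul_assoc]

lemma bilinear_apply_self_isBigO_sq (B : E →L[ℝ] E →L[ℝ] F) (l : Filter E) :
    (fun h => B h h) =O[l] fun h => ‖h‖ ^ 2 :=
  isBigO_of_le' (c := ‖B‖) l fun h => by
    rw [norm_pow, norm_norm, sq, ← mul_assoc]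
    exact B.le_opNorm₂ h h

theorem linearRemainder_isBigO_sq (hf : ∀ᶠ x in 𝓝 w, DifferentiableAt ℝ f x)
    (hf' : DifferentiableAt ℝ (fderiv ℝ f) w) :
    linearRemainder f w =O[𝓝 0] fun h => ‖h‖ ^ 2 := by
  have hquad := (bilinear_apply_self_isBigO_sq (fderiv ℝ (fderiv ℝ f) w)
    (𝓝 0)).const_smul_left (1 / 2 : ℝ)
  exact ((linearRemainder_sub_isLittleO hf hf').isBigO.add hquad).congr_left fun h =>
    sub_add_cancel _ _

lemma linearRemainder_isBigO_away {C : ℝ} {p : ℕ}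
    (hgrowth : ∀ x, ‖f x‖ ≤ C * (1 + ‖x‖ ^ p)) {δ : ℝ} (hδ : 0 < δ) :
    linearRemainder f w =O[𝓟 {h | δ ≤ ‖h‖}] fun h => ‖h‖ ^ 2 + ‖h‖ ^ p := by
  have hsq : (fun h : E => ‖h‖ ^ 2) =O[𝓟 {h | δ ≤ ‖h‖}] fun h => ‖h‖ ^ 2 + ‖h‖ ^ p :=
    .of_norm_le fun h => by simp
  have hone : (fun _ : E => (1 : ℝ)) =O[𝓟 {h | δ ≤ ‖h‖}] fun h => ‖h‖ ^ 2 + ‖h‖ ^ p := by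
    simpa only [pow_zero] using (norm_pow_isBigO_norm_pow_of_le zero_le_two hδ).trans hsq
  have hnorm : (fun h : E => ‖h‖) =O[𝓟 {h | δ ≤ ‖h‖}] fun h => ‖h‖ ^ 2 + ‖h‖ ^ p := by
    simpa only [pow_one] using (norm_pow_isBigO_norm_pow_of_le one_le_two hδ).trans hsq
  have hpow : (fun h : E => ‖h‖ ^ p) =O[𝓟 {h | δ ≤ ‖h‖}] fun h => ‖h‖ ^ 2 + ‖h‖ ^ p :=
    .of_norm_le fun h => by simp
  have hvalue : (fun h => f (w + h)) =O[𝓟 {h | δ ≤ ‖h‖}] fun h => ‖h‖ ^ 2 + ‖h‖ ^ p :=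
    ((comp_add_isBigO_one_add_norm_pow hgrowth w).mono le_top).trans (hone.add hpow)
  have hconst := (isBigO_const_const (f w) (one_ne_zero (α := ℝ)) _).trans hone
  have hlinear := ((fderiv ℝ f w).isBigO_id (𝓟 {h | δ ≤ ‖h‖})).norm_right.trans hnorm
  exact (hvalue.sub hconst).sub hlinear

theorem linearRemainder_isBigO_top {C : ℝ} {p : ℕ}
    (hf : ∀ᶠ x in 𝓝 w, DifferentiableAt ℝ f x) (hf' : DifferentiableAt ℝ (fderiv ℝ f) w)
    (hgrowth : ∀ x, ‖f x‖ ≤ C * (1 + ‖x‖ ^ p)) :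
    linearRemainder f w =O[⊤] fun h => ‖h‖ ^ 2 + ‖h‖ ^ p := by
  have hsq : (fun h : E => ‖h‖ ^ 2) =O[𝓝 0] fun h => ‖h‖ ^ 2 + ‖h‖ ^ p :=
    .of_norm_le fun h => by simp
  exact isBigO_top_of_isBigO_nhds_zero ((linearRemainder_isBigO_sq hf hf').trans hsq)
    fun δ hδ => linearRemainder_isBigO_away hgrowth hδ

lemma tendsto_sqrt_nhdsGT_zero : Tendsto (fun u : ℝ => √u) (𝓝[>] 0) (𝓝 0) := by
  simpa using (Real.continuous_sqrt.tendsto 0).mono_left nhdsWithin_le_nhds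

theorem tendsto_inv_smul_linearRemainder (hf : ∀ᶠ x in 𝓝 w, DifferentiableAt ℝ f x)
    (hf' : DifferentiableAt ℝ (fderiv ℝ f) w) {γ : ℝ → E} {v : E}
    (hγ : Tendsto (fun u => (√u)⁻¹ • γ u) (𝓝[>] 0) (𝓝 v)) :
    Tendsto (fun u => u⁻¹ • linearRemainder f w (γ u)) (𝓝[>] 0)
      (𝓝 ((1 / 2 : ℝ) • fderiv ℝ (fderiv ℝ f) w v v)) := by
  set B := fderiv ℝ (fderiv ℝ f) w
  have hγ_bigO : γ =O[𝓝[>] 0] fun u => √u := by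
    refine ((isBigO_refl (fun u : ℝ => √u) _).smul (hγ.isBigO_one ℝ)).congr' ?_ ?_
    · filter_upwards [self_mem_nhdsWithin] with u hu
      exact smul_inv_smul₀ (Real.sqrt_pos.2 hu).ne' (γ u)
    · exact .of_forall fun u => by simp
  have hγ_zero : Tendsto γ (𝓝[>] 0) (𝓝 0) := hγ_bigO.trans_tendsto tendsto_sqrt_nhdsGT_zero
  have hγ_sq : (fun u => ‖γ u‖ ^ 2) =O[𝓝[>] 0] fun u => u := by
    refine (hγ_bigO.norm_left.pow 2).congr' .rfl ?_
    filter_upwards [self_mem_nhdsWithin] with u hu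
    exact Real.sq_sqrt (le_of_lt hu)
  have hpeano : Tendsto (fun u => u⁻¹ • (linearRemainder f w (γ u) - (1 / 2 : ℝ) • B (γ u) (γ u)))
      (𝓝[>] 0) (𝓝 0) :=
    (((linearRemainder_sub_isLittleO hf hf').comp_tendsto hγ_zero).trans_isBigO
      hγ_sq).tendsto_inv_smul_nhds_zero
  have hquad : Tendsto (fun u => (1 / 2 : ℝ) • B ((√u)⁻¹ • γ u) ((√u)⁻¹ • γ u))
      (𝓝[>] 0) (𝓝 ((1 / 2 : ℝ) • B v v)) :=
    (((by fun_prop : Continuous fun x => B x x).tendsto v).comp hγ).const_smul _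
  refine (zero_add ((1 / 2 : ℝ) • B v v) ▸ hpeano.add hquad).congr' ?_
  filter_upwards [self_mem_nhdsWithin] with u hu
  have hinv : (√u)⁻¹ * (√u)⁻¹ = u⁻¹ := by rw [← mul_inv, Real.mul_self_sqrt (le_of_lt hu)]
  simp only [map_smul, smul_apply, smul_smul, hinv, smul_sub, mul_comm u⁻¹]
  exact sub_add_cancel _ _

end Taylor

section MehlerIncrement

variable {E : Type*} [NormedAddCommGroup E] [NormedSpace ℝ E]

/-- The displacement `(e^{-u} w + σ(u) x) - w`, with `σ(u) = √(1 - e^{-2u})`, of the starting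
point `w` by one step of the Mehler-type semigroup whose noise takes the value `x`. -/
noncomputable def mehlerIncrement (w x : E) (u : ℝ) : E :=
  (Real.exp (-u) - 1) • w + √(1 - Real.exp (-2 * u)) • x

lemma add_mehlerIncrement (w x : E) (u : ℝ) :
    w + mehlerIncrement w x u = Real.exp (-u) • w + √(1 - Real.exp (-2 * u)) • x := by
  unfold mehlerIncrement
  module

lemma continuous_mehlerIncrement (w : E) (u : ℝ) : Continuous fun x => mehlerIncrement w x u := by
  unfold mehlerIncrement
  fun_prop

lemma tendsto_inv_mul_exp_mul_sub_one (c : ℝ) :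
    Tendsto (fun u : ℝ => u⁻¹ * (Real.exp (c * u) - 1)) (𝓝[>] 0) (𝓝 c) := by
  have hderiv : HasDerivAt (fun u : ℝ => Real.exp (c * u)) c 0 := by
    simpa using ((hasDerivAt_id (0 : ℝ)).const_mul c).exp
  simpa using hderiv.tendsto_slope_zero_right

lemma tendsto_inv_mul_exp_neg_sub_one :
    Tendsto (fun u : ℝ => u⁻¹ * (Real.exp (-u) - 1)) (𝓝[>] 0) (𝓝 (-1)) := by
  simpa only [neg_one_mul] using tendsto_inv_mul_exp_mul_sub_one (-1)

lemma tendsto_inv_sqrt_smul_mehlerIncrement (w x : E) :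
    Tendsto (fun u => (√u)⁻¹ • mehlerIncrement w x u) (𝓝[>] 0) (𝓝 (√2 • x)) := by
  have hdrift : Tendsto (fun u : ℝ => (√u)⁻¹ * (Real.exp (-u) - 1)) (𝓝[>] 0) (𝓝 0) := by
    refine (zero_mul (-1 : ℝ) ▸ tendsto_sqrt_nhdsGT_zero.mul
      tendsto_inv_mul_exp_neg_sub_one).congr fun u => ?_
    rw [← mul_assoc, ← div_eq_mul_inv, Real.sqrt_div_self', one_div]
  have hnoise : Tendsto (fun u : ℝ => (√u)⁻¹ * √(1 - Real.exp (-2 * u))) (𝓝[>] 0) (𝓝 √2) := by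
    have hsq := (tendsto_inv_mul_exp_mul_sub_one (-2)).neg.sqrt
    rw [neg_neg] at hsq
    refine hsq.congr' ?_
    filter_upwards [self_mem_nhdsWithin] with u hu
    rw [← mul_neg, neg_sub, Real.sqrt_mul (inv_nonneg.2 (le_of_lt hu)), Real.sqrt_inv]
  have hsum := (hdrift.smul_const w).add (hnoise.smul_const x)
  simpa only [mehlerIncrement, smul_add, smul_smul, zero_smul, zero_add] using hsum

lemma norm_mehlerIncrement_le (w x : E) {u : ℝ} (hu₀ : 0 ≤ u) (hu₁ : u ≤ 1) :
    ‖mehlerIncrement w x u‖ ≤ √u * (2 * (‖w‖ + ‖x‖)) := by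
  have hdrift : |Real.exp (-u) - 1| ≤ √u * 2 := by
    have hexp : Real.exp (-u) ≤ 1 := Real.exp_le_one_iff.2 (neg_nonpos.2 hu₀)
    have hu_sqrt : u ≤ √u := Real.le_sqrt_self_iff.2 hu₁
    rw [abs_of_nonpos (sub_nonpos.2 hexp)]
    linarith [Real.one_sub_le_exp_neg u]
  have hnoise : √(1 - Real.exp (-2 * u)) ≤ √u * 2 := by
    refine Real.sqrt_le_iff.2 ⟨by positivity, ?_⟩
    rw [mul_pow, Real.sq_sqrt hu₀]
    linarith [Real.add_one_le_exp (-2 * u)]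
  calc ‖mehlerIncrement w x u‖
      ≤ |Real.exp (-u) - 1| * ‖w‖ + √(1 - Real.exp (-2 * u)) * ‖x‖ := by
        refine (norm_add_le _ _).trans_eq ?_
        rw [norm_smul, norm_smul, Real.norm_eq_abs, Real.norm_of_nonneg (Real.sqrt_nonneg _)]
    _ ≤ √u * 2 * ‖w‖ + √u * 2 * ‖x‖ := by gcongr
    _ = √u * (2 * (‖w‖ + ‖x‖)) := by ring

lemma norm_mehlerIncrement_pow_le {p : ℕ} (hp : 2 ≤ p) (w x : E) {u : ℝ} (hu₀ : 0 ≤ u)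
    (hu₁ : u ≤ 1) : ‖mehlerIncrement w x u‖ ^ p ≤ u * (2 * (‖w‖ + ‖x‖)) ^ p := by
  have hsqrt : √u ^ p ≤ u :=
    (pow_le_pow_of_le_one (Real.sqrt_nonneg u) (Real.sqrt_le_one.2 hu₁) hp).trans_eq
      (Real.sq_sqrt hu₀)
  calc ‖mehlerIncrement w x u‖ ^ p ≤ (√u * (2 * (‖w‖ + ‖x‖))) ^ p := by
        gcongr
        exact norm_mehlerIncrement_le w x hu₀ hu₁
    _ = √u ^ p * (2 * (‖w‖ + ‖x‖)) ^ p := mul_pow _ _ _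
    _ ≤ u * (2 * (‖w‖ + ‖x‖)) ^ p := by gcongr

end MehlerIncrement

section Generator

variable {E F Ω : Type*} [NormedAddCommGroup E] [NormedSpace ℝ E]
  [NormedAddCommGroup F] [NormedSpace ℝ F] {f : E → F} {w : E}
  [MeasurableSpace Ω] {μ : Measure Ω} {D : Ω → E}

lemma integrable_mehlerIncrement [IsFiniteMeasure μ] (hD : Integrable D μ) (w : E) (u : ℝ) :
    Integrable (fun ω => mehlerIncrement w (D ω) u) μ :=
  (integrable_const _).add (hD.smul _)

lemma integral_mehlerIncrement [IsProbabilityMeasure μ] [CompleteSpace E] (hD : Integrable D μ)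
    (w : E) (u : ℝ) :
    ∫ ω, mehlerIncrement w (D ω) u ∂μ
      = (Real.exp (-u) - 1) • w + √(1 - Real.exp (-2 * u)) • ∫ ω, D ω ∂μ := by
  unfold mehlerIncrement
  rw [integral_add (integrable_const _) (hD.fun_smul _), integral_const, integral_smul,
    probReal_univ, one_smul]

lemma integral_comp_add_sub_eq [IsProbabilityMeasure μ] [CompleteSpace E] [CompleteSpace F]
    {H : Ω → E} (hH : Integrable H μ)
    (hR : Integrable (fun ω => linearRemainder f w (H ω)) μ) :
    (∫ ω, f (w + H ω) ∂μ) - f w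
      = fderiv ℝ f w (∫ ω, H ω ∂μ) + ∫ ω, linearRemainder f w (H ω) ∂μ := by
  have hlinear := (fderiv ℝ f w).integrable_comp hH
  have hsplit : ∀ ω, f (w + H ω) = f w + (fderiv ℝ f w (H ω) + linearRemainder f w (H ω)) := by
    intro ω
    unfold linearRemainder
    abel
  simp only [hsplit]
  rw [integral_add (integrable_const _) (hlinear.fun_add hR), integral_add hlinear hR,
    integral_const, probReal_univ, one_smul, add_sub_cancel_left,
    (fderiv ℝ f w).integral_comp_comm hH]

theorem exists_integrable_norm_linearRemainder_mehlerIncrement_le [IsFiniteMeasure μ] {p : ℕ}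
    (hp : 2 ≤ p) (hD : MemLp D p μ) (hf : ∀ᶠ x in 𝓝 w, DifferentiableAt ℝ f x)
    (hf' : DifferentiableAt ℝ (fderiv ℝ f) w) {C : ℝ}
    (hgrowth : ∀ x, ‖f x‖ ≤ C * (1 + ‖x‖ ^ p)) :
    ∃ G : Ω → ℝ, Integrable G μ ∧ ∀ u ∈ Ioc (0 : ℝ) 1, ∀ ω,
      ‖linearRemainder f w (mehlerIncrement w (D ω) u)‖ ≤ u * G ω := by
  obtain ⟨K, hK, hbound⟩ := (linearRemainder_isBigO_top hf hf' hgrowth).exists_nonneg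
  set X : Ω → ℝ := fun ω => 2 * (‖w‖ + ‖D ω‖)
  have hX : MemLp X p μ := ((memLp_const ‖w‖).add hD.norm).const_mul 2
  have hX_sq : Integrable (fun ω => X ω ^ 2) μ :=
    (hX.mono_exponent (by exact_mod_cast hp)).integrable_sq
  have hX_pow : Integrable (fun ω => X ω ^ p) μ :=
    hX.integrable_norm_pow'.congr <| .of_forall fun ω =>
      congrArg (· ^ p) (Real.norm_of_nonneg (by positivity))
  refine ⟨fun ω => K * (X ω ^ 2 + X ω ^ p), (hX_sq.add hX_pow).const_mul K, fun u hu ω => ?_⟩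
  set h := mehlerIncrement w (D ω) u
  calc ‖linearRemainder f w h‖ ≤ K * (‖h‖ ^ 2 + ‖h‖ ^ p) :=
        (isBigOWith_top.1 hbound h).trans_eq (by rw [Real.norm_of_nonneg (by positivity)])
    _ ≤ K * (u * X ω ^ 2 + u * X ω ^ p) := by
        gcongr
        · exact norm_mehlerIncrement_pow_le le_rfl w (D ω) hu.1.le hu.2
        · exact norm_mehlerIncrement_pow_le hp w (D ω) hu.1.le hu.2
    _ = u * (K * (X ω ^ 2 + X ω ^ p)) := by ring

lemma aestronglyMeasurable_linearRemainder_mehlerIncrement (hcont : Continuous f)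
    (hD : AEStronglyMeasurable D μ) (u : ℝ) :
    AEStronglyMeasurable (fun ω => linearRemainder f w (mehlerIncrement w (D ω) u)) μ :=
  ((continuous_linearRemainder hcont).comp
    (continuous_mehlerIncrement w u)).comp_aestronglyMeasurable hD

lemma tendsto_inv_smul_linearRemainder_mehlerIncrement
    (hf : ∀ᶠ x in 𝓝 w, DifferentiableAt ℝ f x) (hf' : DifferentiableAt ℝ (fderiv ℝ f) w) (x : E) :
    Tendsto (fun u => u⁻¹ • linearRemainder f w (mehlerIncrement w x u)) (𝓝[>] 0)
      (𝓝 (fderiv ℝ (fderiv ℝ f) w x x)) := by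
  have hlim := tendsto_inv_smul_linearRemainder hf hf' (tendsto_inv_sqrt_smul_mehlerIncrement w x)
  have hscale : (1 / 2 * (√2 * √2) : ℝ) = 1 := by norm_num
  simpa only [map_smul, smul_apply, smul_smul, hscale, one_smul] using hlim

theorem tendsto_integral_inv_smul_linearRemainder_mehlerIncrement (hcont : Continuous f)
    (hD : AEStronglyMeasurable D μ) (hf : ∀ᶠ x in 𝓝 w, DifferentiableAt ℝ f x)
    (hf' : DifferentiableAt ℝ (fderiv ℝ f) w) {G : Ω → ℝ} (hG : Integrable G μ)
    (hbound : ∀ u ∈ Ioc (0 : ℝ) 1, ∀ ω,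
      ‖linearRemainder f w (mehlerIncrement w (D ω) u)‖ ≤ u * G ω) :
    Tendsto (fun u => ∫ ω, u⁻¹ • linearRemainder f w (mehlerIncrement w (D ω) u) ∂μ) (𝓝[>] 0)
      (𝓝 (∫ ω, fderiv ℝ (fderiv ℝ f) w (D ω) (D ω) ∂μ)) := by
  refine tendsto_integral_filter_of_dominated_convergence G
    (.of_forall fun u =>
      (aestronglyMeasurable_linearRemainder_mehlerIncrement hcont hD u).const_smul u⁻¹) ?_ hG
    (.of_forall fun ω => tendsto_inv_smul_linearRemainder_mehlerIncrement hf hf' (D ω))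
  filter_upwards [Ioc_mem_nhdsGT zero_lt_one] with u hu
  refine .of_forall fun ω => ?_
  rw [norm_smul, norm_inv, Real.norm_of_nonneg hu.1.le, inv_mul_le_iff₀ hu.1]
  exact hbound u hu ω

theorem stmt_2_general [IsProbabilityMeasure μ] [CompleteSpace E] [CompleteSpace F] {p : ℕ}
    (hp : 2 ≤ p) (hD : MemLp D p μ) (hmean : ∫ ω, D ω ∂μ = 0) (hcont : Continuous f)
    (hf : ∀ᶠ x in 𝓝 w, DifferentiableAt ℝ f x) (hf' : DifferentiableAt ℝ (fderiv ℝ f) w)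
    {C : ℝ} (hgrowth : ∀ x, ‖f x‖ ≤ C * (1 + ‖x‖ ^ p)) :
    Tendsto
      (fun u : ℝ => u⁻¹ •
        ((∫ ω, f (Real.exp (-u) • w + √(1 - Real.exp (-2 * u)) • D ω) ∂μ) - f w))
      (𝓝[>] 0) (𝓝 (-fderiv ℝ f w w + ∫ ω, fderiv ℝ (fderiv ℝ f) w (D ω) (D ω) ∂μ)) := by
  have hD_int : Integrable D μ := hD.integrable (by exact_mod_cast one_le_two.trans hp)
  obtain ⟨G, hG, hbound⟩ :=
    exists_integrable_norm_linearRemainder_mehlerIncrement_le hp hD hf hf' hgrowth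
  have hdrift := tendsto_inv_mul_exp_neg_sub_one.smul_const (fderiv ℝ f w w)
  rw [neg_one_smul] at hdrift
  have hnoise := tendsto_integral_inv_smul_linearRemainder_mehlerIncrement hcont
    hD.aestronglyMeasurable hf hf' hG hbound
  refine (hdrift.add hnoise).congr' ?_
  filter_upwards [Ioc_mem_nhdsGT zero_lt_one] with u hu
  have hR : Integrable (fun ω => linearRemainder f w (mehlerIncrement w (D ω) u)) μ :=
    (hG.const_mul u).mono' (aestronglyMeasurable_linearRemainder_mehlerIncrement hcont
      hD.aestronglyMeasurable u) (.of_forall (hbound u hu))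
  simp only [← add_mehlerIncrement]
  rw [integral_comp_add_sub_eq (integrable_mehlerIncrement hD_int w u) hR,
    integral_mehlerIncrement hD_int, hmean, smul_zero, add_zero, map_smul, integral_smul,
    smul_add, smul_smul]

end Generator

/-- In the setting of the Mehler-type semigroup
`(T_u f)(w) = E[f(e^{-u} w + σ(u) D)]`, `σ(u) = √(1−e^{−2u})`, for every `f ∈ M` and `w ∈ E`,
`lim_{u→0+} u⁻¹ ((T_u f)(w) − f(w)) = −Df(w)[w] + E[D²f(w)[D,D]]`. -/
theorem stmt_2 {E : Type*} [NormedAddCommGroup E] [NormedSpace ℝ E] [CompleteSpace E]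
    [TopologicalSpace.SeparableSpace E]
    {Ω : Type*} [MeasureSpace Ω] [IsProbabilityMeasure (ℙ : Measure Ω)]
    (D : Ω → E) (hDmeas : AEStronglyMeasurable D ℙ)
    (hD3 : Integrable (fun ω => ‖D ω‖ ^ 3) ℙ)
    (hDmean : (∫ ω, D ω ∂ℙ) = 0)
    (f : E → ℝ)
    (hf₁ : Differentiable ℝ f)
    (hf₂ : Differentiable ℝ (fderiv ℝ f))
    (C₀ : ℝ) (hC₀ : ∀ w : E, |f w| ≤ C₀ * (1 + ‖w‖ ^ 3))
    (kf : ℝ)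
    (hkf : ∀ w h : E,
      ‖fderiv ℝ (fderiv ℝ f) (w + h) - fderiv ℝ (fderiv ℝ f) w‖ ≤ kf * ‖h‖)
    (w : E) :
    Filter.Tendsto
      (fun u : ℝ =>
        u⁻¹ * ((∫ ω, f (Real.exp (-u) • w + Real.sqrt (1 - Real.exp (-2 * u)) • D ω) ∂ℙ)
          - f w))
      (nhdsWithin 0 (Set.Ioi 0))
      (nhds (-(fderiv ℝ f w w) + ∫ ω, ((fderiv ℝ (fderiv ℝ f) w) (D ω)) (D ω) ∂ℙ)) := by
  have hD : MemLp D (3 : ℕ) ℙ := by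
    refine (integrable_norm_rpow_iff hDmeas (by norm_num) (by norm_num)).1 ?_
    simpa using hD3
  exact stmt_2_general (by norm_num) hD hDmean hf₁.continuous (.of_forall hf₁) (hf₂ w) hC₀
end

section
/- Let g ∈ M satisfy E[g(D)] = 0. Then for every w ∈ E the integral φ(g)(w) := −∫₀^∞ (T_u g)(w) du converges absolutely, the function φ(g) : E → ℝ is twice Fréchet differentiable, and for k = 1,2 and every w ∈ E, D^k φ(g)(w) = −∫₀^∞ e^{−ku} E[D^k g(w e^{−u} + σ(u) D)] du, the integral being a Bochner integral in the Banach space of continuous k-linear forms on E. -/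
open MeasureTheory ProbabilityTheory

/-!
Moving `w` by `h` moves `e⁻ᵘ w + σ(u) D` by `e⁻ᵘ h`, so each derivative in `w` gains a factor `e⁻ᵘ`:
`D (T_u g) = e⁻ᵘ T_u (D g)`. Since `D² g` grows at most polynomially, so do `D g` and `g`, and the
moments of `D` bound `T_u (Dᵏ g) (w)` locally uniformly in `w` and uniformly in `u ≥ 0`; the weights
`e⁻ᵏᵘ` then allow differentiation under `∫₀^∞ du`. The undifferentiated integral has no such weight;
there `E[g(D)] = 0` is used through `|T_u g(w) - E[g(D)]| ≤ e⁻ᵘ C(w)`, which holds because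
`1 - σ(u) ≤ e⁻ᵘ` puts `e⁻ᵘ w + σ(u) D` within `e⁻ᵘ (‖w‖ + ‖D‖)` of `D`.
-/

section PolynomialGrowth

variable {E F : Type*} [NormedAddCommGroup E] [NormedAddCommGroup F]

lemma continuous_of_norm_add_sub_le {k : ℝ} {f : E → F}
    (hf : ∀ w h, ‖f (w + h) - f w‖ ≤ k * ‖h‖) : Continuous f := by
  refine (LipschitzWith.of_dist_le' (K := k) fun x y ↦ ?_).continuous
  simpa [dist_eq_norm] using hf y (x - y)

lemma contDiff_two_of_norm_fderiv_fderiv_add_sub_le [NormedSpace ℝ E] [NormedSpace ℝ F]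
    {k : ℝ} {f : E → F} (hf : Differentiable ℝ f) (hf' : Differentiable ℝ (fderiv ℝ f))
    (hk : ∀ w h, ‖fderiv ℝ (fderiv ℝ f) (w + h) - fderiv ℝ (fderiv ℝ f) w‖ ≤ k * ‖h‖) :
    ContDiff ℝ 2 f := by
  rw [← one_add_one_eq_two, contDiff_succ_iff_fderiv]
  exact ⟨hf, by simp, contDiff_one_iff_fderiv.2 ⟨hf', continuous_of_norm_add_sub_le hk⟩⟩

/-- Polynomial growth of degree at most `n` with constant `A`. The weight `(1 + ‖x‖) ^ n` is used
instead of `1 + ‖x‖ ^ n` because it is multiplicative in `n`. -/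
def HasPolyGrowth (n : ℕ) (A : ℝ) (f : E → F) : Prop :=
  ∀ x, ‖f x‖ ≤ A * (1 + ‖x‖) ^ n

namespace HasPolyGrowth

variable {n : ℕ} {A r : ℝ} {f : E → F} {x y : E}

lemma const_nonneg (hf : HasPolyGrowth n A f) : 0 ≤ A := by
  simpa using (norm_nonneg _).trans (hf 0)

lemma norm_le (hf : HasPolyGrowth n A f) (hx : ‖x‖ ≤ r) : ‖f x‖ ≤ A * (1 + r) ^ n :=
  (hf x).trans <| mul_le_mul_of_nonneg_left (by gcongr) hf.const_nonneg

lemma of_norm_add_sub_le {k : ℝ} (hf : ∀ w h, ‖f (w + h) - f w‖ ≤ k * ‖h‖) :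
    HasPolyGrowth 1 (‖f 0‖ + |k|) f := fun x ↦ by
  have increment_le : ‖f x - f 0‖ ≤ |k| * ‖x‖ := by
    simpa using (hf 0 x).trans (mul_le_mul_of_nonneg_right (le_abs_self k) (norm_nonneg x))
  calc ‖f x‖ ≤ ‖f 0‖ + ‖f x - f 0‖ := norm_le_norm_add_norm_sub' _ _
    _ ≤ ‖f 0‖ + |k| * ‖x‖ := by gcongr
    _ ≤ (‖f 0‖ + |k|) * (1 + ‖x‖) ^ 1 := by
      nlinarith [abs_nonneg k, mul_nonneg (norm_nonneg (f 0)) (norm_nonneg x)]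

variable [NormedSpace ℝ E] [NormedSpace ℝ F]

lemma norm_sub_le (hf' : HasPolyGrowth n A (fderiv ℝ f)) (hf : Differentiable ℝ f)
    (hx : ‖x‖ ≤ r) (hy : ‖y‖ ≤ r) : ‖f x - f y‖ ≤ A * (1 + r) ^ n * ‖x - y‖ :=
  (convex_closedBall (0 : E) r).norm_image_sub_le_of_norm_fderiv_le (fun z _ ↦ hf z)
    (fun _ hz ↦ hf'.norm_le (mem_closedBall_zero_iff.1 hz))
    (mem_closedBall_zero_iff.2 hy) (mem_closedBall_zero_iff.2 hx)

lemma of_fderiv (hf' : HasPolyGrowth n A (fderiv ℝ f)) (hf : Differentiable ℝ f) :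
    HasPolyGrowth (n + 1) (‖f 0‖ + A) f := fun x ↦ by
  have hA := hf'.const_nonneg
  have increment_le : ‖f x - f 0‖ ≤ A * (1 + ‖x‖) ^ n * ‖x‖ := by
    simpa using hf'.norm_sub_le hf le_rfl (norm_zero.trans_le (norm_nonneg x))
  calc ‖f x‖ ≤ ‖f 0‖ * 1 + ‖f x - f 0‖ := by
        simpa using norm_le_norm_add_norm_sub' (f x) (f 0)
    _ ≤ ‖f 0‖ * (1 + ‖x‖) ^ (n + 1) + A * (1 + ‖x‖) ^ n * (1 + ‖x‖) := by
        gcongr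
        · exact one_le_pow₀ (by simp)
        · exact increment_le.trans (by gcongr; simp)
    _ = (‖f 0‖ + A) * (1 + ‖x‖) ^ (n + 1) := by ring

end HasPolyGrowth

end PolynomialGrowth

section MehlerPoint

variable {E F : Type*} [NormedAddCommGroup E] [NormedSpace ℝ E]
  [NormedAddCommGroup F] {u : ℝ}

/-- The interpolation `e⁻ᵘ w + σ(u) d`, with `σ(u) = √(1 - e⁻²ᵘ)`, from `w` at `u = 0` to `d` at
`u = ∞`. Only `u ≥ 0` is meaningful: for `u < 0` the square root is `0` by convention. -/
noncomputable def mehlerPoint (u : ℝ) (w d : E) : E :=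
  Real.exp (-u) • w + Real.sqrt (1 - Real.exp (-2 * u)) • d

lemma continuous_mehlerPoint (w : E) : Continuous fun z : ℝ × E ↦ mehlerPoint z.1 w z.2 := by
  unfold mehlerPoint
  fun_prop

lemma hasFDerivAt_mehlerPoint (u : ℝ) (w d : E) :
    HasFDerivAt (fun x ↦ mehlerPoint u x d) (Real.exp (-u) • ContinuousLinearMap.id ℝ E) w :=
  ((hasFDerivAt_id w).const_smul (Real.exp (-u))).add_const _

lemma sqrt_one_sub_exp_le_one (u : ℝ) : Real.sqrt (1 - Real.exp (-2 * u)) ≤ 1 :=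
  Real.sqrt_le_one.2 (by linarith [Real.exp_pos (-2 * u)])

lemma one_sub_exp_le_sqrt (hu : 0 ≤ u) :
    1 - Real.exp (-u) ≤ Real.sqrt (1 - Real.exp (-2 * u)) := by
  have exp_two_mul : Real.exp (-2 * u) = Real.exp (-u) ^ 2 := by
    rw [← Real.exp_nat_mul]
    ring_nf
  have exp_le_one : Real.exp (-u) ≤ 1 := Real.exp_le_one_iff.2 (neg_nonpos.2 hu)
  rw [exp_two_mul]
  exact Real.le_sqrt_of_sq_le (by nlinarith [Real.exp_pos (-u)])

lemma norm_mehlerPoint_le (hu : 0 ≤ u) (w d : E) : ‖mehlerPoint u w d‖ ≤ ‖w‖ + ‖d‖ := by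
  have exp_le_one : Real.exp (-u) ≤ 1 := Real.exp_le_one_iff.2 (neg_nonpos.2 hu)
  refine norm_add_le_of_le ?_ ?_
  · rw [norm_smul, Real.norm_of_nonneg (Real.exp_pos _).le]
    exact mul_le_of_le_one_left (norm_nonneg w) exp_le_one
  · rw [norm_smul, Real.norm_of_nonneg (Real.sqrt_nonneg _)]
    exact mul_le_of_le_one_left (norm_nonneg d) (sqrt_one_sub_exp_le_one u)

lemma norm_mehlerPoint_sub_le (hu : 0 ≤ u) (w d : E) :
    ‖mehlerPoint u w d - d‖ ≤ Real.exp (-u) * (‖w‖ + ‖d‖) := by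
  have sub_eq : mehlerPoint u w d - d
      = Real.exp (-u) • w - (1 - Real.sqrt (1 - Real.exp (-2 * u))) • d := by
    rw [mehlerPoint, sub_smul, one_smul]
    abel
  have sqrt_le_one := sqrt_one_sub_exp_le_one u
  have one_sub_sqrt_le : 1 - Real.sqrt (1 - Real.exp (-2 * u)) ≤ Real.exp (-u) := by
    linarith [one_sub_exp_le_sqrt hu]
  rw [sub_eq, mul_add]
  refine norm_sub_le_of_le ?_ ?_
  · rw [norm_smul, Real.norm_of_nonneg (Real.exp_pos _).le]
  · rw [norm_smul, Real.norm_of_nonneg (sub_nonneg.2 sqrt_le_one)]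
    gcongr

lemma HasPolyGrowth.norm_comp_mehlerPoint_le {n : ℕ} {A r : ℝ} {f : E → F} {w : E}
    (hf : HasPolyGrowth n A f) (hu : 0 ≤ u) (hw : ‖w‖ ≤ r) (d : E) :
    ‖f (mehlerPoint u w d)‖ ≤ A * (1 + r + ‖d‖) ^ n := by
  rw [add_assoc]
  exact hf.norm_le ((norm_mehlerPoint_le hu w d).trans (by gcongr))

variable [NormedSpace ℝ F]

lemma hasFDerivAt_comp_mehlerPoint {f : E → F} (hf : Differentiable ℝ f) (u : ℝ) (w d : E) :
    HasFDerivAt (fun x ↦ f (mehlerPoint u x d))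
      (Real.exp (-u) • fderiv ℝ f (mehlerPoint u w d)) w := by
  refine ((hf _).hasFDerivAt.comp w (hasFDerivAt_mehlerPoint u w d)).congr_fderiv ?_
  rw [ContinuousLinearMap.comp_smul, ContinuousLinearMap.comp_id]

lemma HasPolyGrowth.norm_comp_mehlerPoint_sub_le {n : ℕ} {A : ℝ} {f : E → F}
    (hf' : HasPolyGrowth n A (fderiv ℝ f)) (hf : Differentiable ℝ f) (hu : 0 ≤ u) (w d : E) :
    ‖f (mehlerPoint u w d) - f d‖ ≤ Real.exp (-u) * (A * (1 + ‖w‖ + ‖d‖) ^ (n + 1)) := by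
  have hA := hf'.const_nonneg
  calc ‖f (mehlerPoint u w d) - f d‖
      ≤ A * (1 + (‖w‖ + ‖d‖)) ^ n * ‖mehlerPoint u w d - d‖ :=
        hf'.norm_sub_le hf (norm_mehlerPoint_le hu w d) (le_add_of_nonneg_left (norm_nonneg w))
    _ ≤ A * (1 + (‖w‖ + ‖d‖)) ^ n * (Real.exp (-u) * (1 + (‖w‖ + ‖d‖))) := by
        gcongr
        exact (norm_mehlerPoint_sub_le hu w d).trans
          (mul_le_mul_of_nonneg_left (by linarith) (Real.exp_pos _).le)
    _ = Real.exp (-u) * (A * (1 + ‖w‖ + ‖d‖) ^ (n + 1)) := by ring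

end MehlerPoint

section Mehler

variable {E F Ω : Type*} [NormedAddCommGroup E] [NormedAddCommGroup F] [MeasurableSpace Ω]
  {P : Measure Ω} {D : Ω → E} {n : ℕ} {A r u : ℝ} {f : E → F} {w : E}

lemma memLp_natCast_of_integrable_norm_pow (hD : AEStronglyMeasurable D P) (hn : n ≠ 0)
    (hDn : Integrable (fun ω ↦ ‖D ω‖ ^ n) P) : MemLp D n P :=
  (integrable_norm_rpow_iff hD (by simpa using hn) (by simp)).1 (by simpa using hDn)

lemma integrable_const_add_norm_pow [IsFiniteMeasure P] (hD : MemLp D n P) (hr : 0 ≤ r) :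
    Integrable (fun ω ↦ (r + ‖D ω‖) ^ n) P := by
  refine ((memLp_const r).add hD.norm).integrable_norm_pow'.congr (.of_forall fun ω ↦ ?_)
  simp [abs_of_nonneg (add_nonneg hr (norm_nonneg (D ω)))]

lemma HasPolyGrowth.integrable_comp [IsFiniteMeasure P] (hf : HasPolyGrowth n A f)
    (hf_cont : Continuous f) (hD : MemLp D n P) : Integrable (fun ω ↦ f (D ω)) P :=
  ((integrable_const_add_norm_pow hD zero_le_one).const_mul A).mono'
    (hf_cont.comp_aestronglyMeasurable hD.aestronglyMeasurable) (.of_forall fun ω ↦ hf (D ω))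

variable [NormedSpace ℝ E]

lemma HasPolyGrowth.integrable_comp_mehlerPoint [IsFiniteMeasure P] (hf : HasPolyGrowth n A f)
    (hf_cont : Continuous f) (hD : MemLp D n P) (hu : 0 ≤ u) (w : E) :
    Integrable (fun ω ↦ f (mehlerPoint u w (D ω))) P := by
  refine ((integrable_const_add_norm_pow hD (r := 1 + ‖w‖) (by positivity)).const_mul A).mono'
    ?_ (.of_forall fun ω ↦ hf.norm_comp_mehlerPoint_le hu le_rfl (D ω))
  have hcont : Continuous fun d ↦ f (mehlerPoint u w d) :=
    hf_cont.comp ((continuous_mehlerPoint w).comp (.prodMk_right u))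
  exact hcont.comp_aestronglyMeasurable hD.aestronglyMeasurable

variable [NormedSpace ℝ F]

/-- The Mehler-type operator `(T_u f)(w) = E[f(e⁻ᵘ w + σ(u) D)]`, for vector-valued `f` so that it
also applies to the derivatives of a function. -/
noncomputable def mehler (P : Measure Ω) (D : Ω → E) (u : ℝ) (f : E → F) (w : E) : F :=
  ∫ ω, f (mehlerPoint u w (D ω)) ∂P

lemma aestronglyMeasurable_mehler [SFinite P] (hf : Continuous f) (hD : AEStronglyMeasurable D P)
    (ν : Measure ℝ) [SFinite ν] (w : E) :
    AEStronglyMeasurable (fun u ↦ mehler P D u f w) ν :=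
  have hpair : AEStronglyMeasurable (fun z : ℝ × Ω ↦ (z.1, D z.2)) (ν.prod P) :=
    measurable_fst.aestronglyMeasurable.prodMk hD.comp_snd
  ((hf.comp (continuous_mehlerPoint w)).comp_aestronglyMeasurable hpair).integral_prod_right'

lemma HasPolyGrowth.norm_mehler_le [IsFiniteMeasure P] (hf : HasPolyGrowth n A f)
    (hD : MemLp D n P) (hu : 0 ≤ u) (hw : ‖w‖ ≤ r) :
    ‖mehler P D u f w‖ ≤ ∫ ω, A * (1 + r + ‖D ω‖) ^ n ∂P :=
  have hr : 0 ≤ r := (norm_nonneg w).trans hw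
  norm_integral_le_of_norm_le ((integrable_const_add_norm_pow hD (by positivity)).const_mul A)
    (.of_forall fun ω ↦ hf.norm_comp_mehlerPoint_le hu hw (D ω))

lemma HasPolyGrowth.norm_mehler_sub_integral_le [IsFiniteMeasure P]
    (hf' : HasPolyGrowth n A (fderiv ℝ f)) (hf : Differentiable ℝ f)
    (hD : MemLp D (n + 1 : ℕ) P) (hu : 0 ≤ u) (w : E) :
    ‖mehler P D u f w - ∫ ω, f (D ω) ∂P‖
      ≤ Real.exp (-u) * ∫ ω, A * (1 + ‖w‖ + ‖D ω‖) ^ (n + 1) ∂P := by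
  have hgrowth := hf'.of_fderiv hf
  have bound_integrable := ((integrable_const_add_norm_pow hD
    (r := 1 + ‖w‖) (by positivity)).const_mul A).const_mul (Real.exp (-u))
  rw [mehler, ← integral_sub (hgrowth.integrable_comp_mehlerPoint hf.continuous hD hu w)
    (hgrowth.integrable_comp hf.continuous hD), ← integral_const_mul]
  exact norm_integral_le_of_norm_le bound_integrable
    (.of_forall fun ω ↦ hf'.norm_comp_mehlerPoint_sub_le hf hu w (D ω))

lemma HasPolyGrowth.hasFDerivAt_mehler [IsFiniteMeasure P]
    (hf' : HasPolyGrowth n A (fderiv ℝ f)) (hf : ContDiff ℝ 1 f)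
    (hD : MemLp D (n + 1 : ℕ) P) (hu : 0 ≤ u) (w : E) :
    HasFDerivAt (mehler P D u f) (Real.exp (-u) • mehler P D u (fderiv ℝ f) w) w := by
  have hf_diff : Differentiable ℝ f := hf.differentiable one_ne_zero
  have hDn : MemLp D n P := hD.mono_exponent (by gcongr; exact n.le_succ)
  have f_integrable (x : E) : Integrable (fun ω ↦ f (mehlerPoint u x (D ω))) P :=
    (hf'.of_fderiv hf_diff).integrable_comp_mehlerPoint hf.continuous hD hu x
  have fderiv_integrable : Integrable
      (fun ω ↦ Real.exp (-u) • fderiv ℝ f (mehlerPoint u w (D ω))) P :=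
    (hf'.integrable_comp_mehlerPoint (hf.continuous_fderiv one_ne_zero) hDn hu w).fun_smul _
  have bound_integrable : Integrable
      (fun ω ↦ Real.exp (-u) * (A * (1 + (‖w‖ + 1) + ‖D ω‖) ^ n)) P :=
    ((integrable_const_add_norm_pow hDn (by positivity)).const_mul A).const_mul _
  rw [mehler, ← integral_smul]
  refine hasFDerivAt_integral_of_dominated_of_fderiv_le (Metric.ball_mem_nhds w one_pos)
    (.of_forall fun x ↦ (f_integrable x).aestronglyMeasurable) (f_integrable w)
    fderiv_integrable.aestronglyMeasurable (.of_forall fun ω x hx ↦ ?_) bound_integrable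
    (.of_forall fun ω x _ ↦ hasFDerivAt_comp_mehlerPoint hf_diff u x (D ω))
  rw [norm_smul, Real.norm_of_nonneg (Real.exp_pos _).le]
  gcongr
  exact hf'.norm_comp_mehlerPoint_le hu (norm_lt_of_mem_ball hx).le (D ω)

end Mehler

section SteinSolution

variable {E F Ω : Type*} [NormedAddCommGroup E] [NormedSpace ℝ E]
  [NormedAddCommGroup F] [NormedSpace ℝ F] [MeasurableSpace Ω]
  {P : Measure Ω} [IsFiniteMeasure P] {D : Ω → E} {n : ℕ} {A c : ℝ} {f : E → F}

lemma HasPolyGrowth.integrableOn_exp_smul_mehler (hf : HasPolyGrowth n A f)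
    (hf_cont : Continuous f) (hD : MemLp D n P) (hc : 0 < c) (w : E) :
    IntegrableOn (fun u ↦ Real.exp (-c * u) • mehler P D u f w) (Set.Ioi 0) := by
  have weight_integrable : IntegrableOn (fun u ↦ Real.exp (-c * u)) (Set.Ioi 0) :=
    exp_neg_integrableOn_Ioi 0 hc
  refine weight_integrable.smul_bdd (∫ ω, A * (1 + ‖w‖ + ‖D ω‖) ^ n ∂P)
    (aestronglyMeasurable_mehler hf_cont hD.aestronglyMeasurable _ w) ?_
  filter_upwards [ae_restrict_mem measurableSet_Ioi] with u hu
  exact hf.norm_mehler_le hD (le_of_lt hu) le_rfl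

lemma HasPolyGrowth.hasFDerivAt_exp_smul_mehler (hf' : HasPolyGrowth n A (fderiv ℝ f))
    (hf : ContDiff ℝ 1 f) (hD : MemLp D (n + 1 : ℕ) P) {u : ℝ} (hu : 0 ≤ u) (w : E) :
    HasFDerivAt (fun x ↦ Real.exp (-c * u) • mehler P D u f x)
      (Real.exp (-(c + 1) * u) • mehler P D u (fderiv ℝ f) w) w := by
  have exp_mul_exp : Real.exp (-(c + 1) * u) = Real.exp (-c * u) * Real.exp (-u) := by
    rw [← Real.exp_add]
    ring_nf
  rw [exp_mul_exp, mul_smul]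
  exact (hf'.hasFDerivAt_mehler hf hD hu w).const_smul _

lemma HasPolyGrowth.hasFDerivAt_integral_exp_smul_mehler
    (hf' : HasPolyGrowth n A (fderiv ℝ f)) (hf : ContDiff ℝ 1 f) (hD : MemLp D (n + 1 : ℕ) P)
    (hc : -1 < c) {w : E}
    (hf_int : IntegrableOn (fun u ↦ Real.exp (-c * u) • mehler P D u f w) (Set.Ioi 0)) :
    HasFDerivAt (fun x ↦ ∫ u in Set.Ioi (0 : ℝ), Real.exp (-c * u) • mehler P D u f x)
      (∫ u in Set.Ioi (0 : ℝ), Real.exp (-(c + 1) * u) • mehler P D u (fderiv ℝ f) w) w := by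
  have hDn : MemLp D n P := hD.mono_exponent (by gcongr; exact n.le_succ)
  have bound_integrable : IntegrableOn (fun u ↦ Real.exp (-(c + 1) * u) *
      ∫ ω, A * (1 + (‖w‖ + 1) + ‖D ω‖) ^ n ∂P) (Set.Ioi 0) :=
    (exp_neg_integrableOn_Ioi 0 (by linarith)).mul_const _
  have fderiv_integrable := hf'.integrableOn_exp_smul_mehler
    (hf.continuous_fderiv one_ne_zero) hDn (c := c + 1) (by linarith) w
  refine hasFDerivAt_integral_of_dominated_of_fderiv_le
    (F := fun x u ↦ Real.exp (-c * u) • mehler P D u f x)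
    (F' := fun x u ↦ Real.exp (-(c + 1) * u) • mehler P D u (fderiv ℝ f) x)
    (Metric.ball_mem_nhds w one_pos) (.of_forall fun x ↦ ?_) hf_int
    fderiv_integrable.aestronglyMeasurable ?_ bound_integrable ?_
  · have exp_continuous : Continuous fun u : ℝ ↦ Real.exp (-c * u) := by fun_prop
    exact exp_continuous.aestronglyMeasurable.smul
      (aestronglyMeasurable_mehler hf.continuous hD.aestronglyMeasurable _ x)
  · filter_upwards [ae_restrict_mem measurableSet_Ioi] with u hu x hx
    rw [norm_smul, Real.norm_of_nonneg (Real.exp_pos _).le]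
    gcongr
    exact hf'.norm_mehler_le hDn (le_of_lt hu) (norm_lt_of_mem_ball hx).le
  · filter_upwards [ae_restrict_mem measurableSet_Ioi] with u hu x _
    exact hf'.hasFDerivAt_exp_smul_mehler hf hD (le_of_lt hu) x

/-- The function `φ(f)(w) = -∫₀^∞ (T_u f)(w) du`. It is meaningful when `E[f(D)] = 0`; otherwise
the integral need not converge and Mathlib assigns it the value `0`. -/
noncomputable def steinSolution (P : Measure Ω) (D : Ω → E) (f : E → F) (w : E) : F :=
  -∫ u in Set.Ioi (0 : ℝ), mehler P D u f w

lemma HasPolyGrowth.integrableOn_mehler (hf' : HasPolyGrowth n A (fderiv ℝ f))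
    (hf : Differentiable ℝ f) (hD : MemLp D (n + 1 : ℕ) P) (hmean : ∫ ω, f (D ω) ∂P = 0) (w : E) :
    IntegrableOn (fun u ↦ mehler P D u f w) (Set.Ioi 0) := by
  refine Integrable.mono' ((integrableOn_exp_neg_Ioi 0).mul_const
    (∫ ω, A * (1 + ‖w‖ + ‖D ω‖) ^ (n + 1) ∂P))
    (aestronglyMeasurable_mehler hf.continuous hD.aestronglyMeasurable _ w) ?_
  filter_upwards [ae_restrict_mem measurableSet_Ioi] with u hu
  simpa only [hmean, sub_zero] using hf'.norm_mehler_sub_integral_le hf hD (le_of_lt hu) w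

lemma HasPolyGrowth.hasFDerivAt_steinSolution (hf' : HasPolyGrowth n A (fderiv ℝ f))
    (hf : ContDiff ℝ 1 f) (hD : MemLp D (n + 1 : ℕ) P) (hmean : ∫ ω, f (D ω) ∂P = 0) (w : E) :
    HasFDerivAt (steinSolution P D f)
      (-∫ u in Set.Ioi (0 : ℝ), Real.exp (-u) • mehler P D u (fderiv ℝ f) w) w := by
  have hf_int := hf'.integrableOn_mehler (hf.differentiable one_ne_zero) hD hmean w
  have hderiv := hf'.hasFDerivAt_integral_exp_smul_mehler hf hD (c := 0) (w := w)
    (by norm_num) (by simpa using hf_int)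
  change HasFDerivAt (fun x ↦ -∫ u in Set.Ioi (0 : ℝ), mehler P D u f x) _ w
  simpa using hderiv.fun_neg

lemma HasPolyGrowth.hasFDerivAt_fderiv_steinSolution
    (hf'' : HasPolyGrowth n A (fderiv ℝ (fderiv ℝ f))) (hf : ContDiff ℝ 2 f)
    (hD : MemLp D (n + 2 : ℕ) P) (hmean : ∫ ω, f (D ω) ∂P = 0) (w : E) :
    HasFDerivAt (fderiv ℝ (steinSolution P D f))
      (-∫ u in Set.Ioi (0 : ℝ), Real.exp (-2 * u) • mehler P D u (fderiv ℝ (fderiv ℝ f)) w) w := by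
  have hf_fderiv : ContDiff ℝ 1 (fderiv ℝ f) := hf.fderiv_right (by norm_num)
  have hf' := hf''.of_fderiv (hf_fderiv.differentiable one_ne_zero)
  have hDn : MemLp D (n + 1 : ℕ) P := hD.mono_exponent (by gcongr; simp)
  have fderiv_eq : fderiv ℝ (steinSolution P D f) = fun x ↦
      -∫ u in Set.Ioi (0 : ℝ), Real.exp (-1 * u) • mehler P D u (fderiv ℝ f) x := by
    funext x
    simpa using (hf'.hasFDerivAt_steinSolution (hf.of_le one_le_two) hD hmean x).fderiv
  have hderiv := hf''.hasFDerivAt_integral_exp_smul_mehler hf_fderiv hDn (by norm_num)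
    (hf'.integrableOn_exp_smul_mehler hf_fderiv.continuous hDn one_pos w)
  rw [fderiv_eq]
  simpa only [one_add_one_eq_two] using hderiv.fun_neg

set_option maxSynthPendingDepth 3 in
theorem stmt_3_general [CompleteSpace F] (hf : ContDiff ℝ 2 f)
    (hf'' : HasPolyGrowth n A (fderiv ℝ (fderiv ℝ f)))
    (hD : MemLp D (n + 2 : ℕ) P) (hmean : ∫ ω, f (D ω) ∂P = 0) (w : E) :
    IntegrableOn (fun u ↦ mehler P D u f w) (Set.Ioi 0) ∧
    IntegrableOn (fun u ↦ Real.exp (-u) • mehler P D u (fderiv ℝ f) w) (Set.Ioi 0) ∧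
    IntegrableOn (fun u ↦ Real.exp (-2 * u) • mehler P D u (fderiv ℝ (fderiv ℝ f)) w)
      (Set.Ioi 0) ∧
    HasFDerivAt (steinSolution P D f)
      (-∫ u in Set.Ioi (0 : ℝ), Real.exp (-u) • mehler P D u (fderiv ℝ f) w) w ∧
    HasFDerivAt (fderiv ℝ (steinSolution P D f))
      (-∫ u in Set.Ioi (0 : ℝ),
        Real.exp (-2 * u) • mehler P D u (fderiv ℝ (fderiv ℝ f)) w) w := by
  have hf_fderiv : ContDiff ℝ 1 (fderiv ℝ f) := hf.fderiv_right (by norm_num)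
  have hf' := hf''.of_fderiv (hf_fderiv.differentiable one_ne_zero)
  have hD₀ : MemLp D n P := hD.mono_exponent (by gcongr; simp)
  have hD₁ : MemLp D (n + 1 : ℕ) P := hD.mono_exponent (by gcongr; simp)
  have fderiv_integrable :=
    hf'.integrableOn_exp_smul_mehler hf_fderiv.continuous hD₁ one_pos w
  exact ⟨hf'.integrableOn_mehler (hf.differentiable two_ne_zero) hD hmean w,
    by simpa using fderiv_integrable,
    hf''.integrableOn_exp_smul_mehler (hf_fderiv.continuous_fderiv one_ne_zero) hD₀ two_pos w,
    hf'.hasFDerivAt_steinSolution (hf.of_le one_le_two) hD hmean w,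
    hf''.hasFDerivAt_fderiv_steinSolution hf hD hmean w⟩

end SteinSolution

/-- Let `g ∈ M` with `E[g(D)] = 0`. Then for every `w` the integral
`φ(g)(w) = −∫₀^∞ (T_u g)(w) du` converges absolutely, `φ(g)` is twice Fréchet differentiable,
and for `k = 1, 2`, `D^k φ(g)(w) = −∫₀^∞ e^{−ku} E[D^k g(e^{−u} w + σ(u) D)] du`, the integrals
being Bochner integrals in the spaces of continuous (bi)linear forms. -/
theorem stmt_3 {E : Type*} [NormedAddCommGroup E] [NormedSpace ℝ E] [CompleteSpace E]
    [TopologicalSpace.SeparableSpace E]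
    {Ω : Type*} [MeasureSpace Ω] [IsProbabilityMeasure (ℙ : Measure Ω)]
    (D : Ω → E) (hDmeas : AEStronglyMeasurable D ℙ)
    (hD3 : Integrable (fun ω => ‖D ω‖ ^ 3) ℙ)
    (hDmean : (∫ ω, D ω ∂ℙ) = 0)
    (g : E → ℝ)
    (hg₁ : Differentiable ℝ g)
    (hg₂ : Differentiable ℝ (fderiv ℝ g))
    (C₀ : ℝ) (hC₀ : ∀ w : E, |g w| ≤ C₀ * (1 + ‖w‖ ^ 3))
    (kg : ℝ)
    (hkg : ∀ w h : E,
      ‖fderiv ℝ (fderiv ℝ g) (w + h) - fderiv ℝ (fderiv ℝ g) w‖ ≤ kg * ‖h‖)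
    (hmean : (∫ ω, g (D ω) ∂ℙ) = 0) :
    -- absolute convergence of the defining integral
    (∀ w : E, IntegrableOn
      (fun u : ℝ => ∫ ω, g (Real.exp (-u) • w + Real.sqrt (1 - Real.exp (-2 * u)) • D ω) ∂ℙ)
      (Set.Ioi 0)) ∧
    -- `φ(g)` is twice Fréchet differentiable
    Differentiable ℝ
      (fun w : E => -∫ u in Set.Ioi (0 : ℝ),
        ∫ ω, g (Real.exp (-u) • w + Real.sqrt (1 - Real.exp (-2 * u)) • D ω) ∂ℙ) ∧
    Differentiable ℝ
      (fderiv ℝ (fun w : E => -∫ u in Set.Ioi (0 : ℝ),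
        ∫ ω, g (Real.exp (-u) • w + Real.sqrt (1 - Real.exp (-2 * u)) • D ω) ∂ℙ)) ∧
    -- first derivative formula
    (∀ w : E,
      fderiv ℝ (fun w : E => -∫ u in Set.Ioi (0 : ℝ),
          ∫ ω, g (Real.exp (-u) • w + Real.sqrt (1 - Real.exp (-2 * u)) • D ω) ∂ℙ) w
        = -∫ u in Set.Ioi (0 : ℝ), Real.exp (-u) •
            (∫ ω, fderiv ℝ g (Real.exp (-u) • w + Real.sqrt (1 - Real.exp (-2 * u)) • D ω) ∂ℙ)) ∧
    -- second derivative formula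
    (∀ w : E,
      fderiv ℝ (fderiv ℝ (fun w : E => -∫ u in Set.Ioi (0 : ℝ),
          ∫ ω, g (Real.exp (-u) • w + Real.sqrt (1 - Real.exp (-2 * u)) • D ω) ∂ℙ)) w
        = -∫ u in Set.Ioi (0 : ℝ), Real.exp (-2 * u) •
            (∫ ω, fderiv ℝ (fderiv ℝ g)
              (Real.exp (-u) • w + Real.sqrt (1 - Real.exp (-2 * u)) • D ω) ∂ℙ)) := by
  have hg : ContDiff ℝ 2 g := contDiff_two_of_norm_fderiv_fderiv_add_sub_le hg₁ hg₂ hkg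
  have hD : MemLp D (1 + 2 : ℕ) ℙ := memLp_natCast_of_integrable_norm_pow hDmeas (by simp) hD3
  have main := stmt_3_general hg (.of_norm_add_sub_le hkg) hD hmean
  exact ⟨fun w ↦ (main w).1, fun w ↦ (main w).2.2.2.1.differentiableAt,
    fun w ↦ (main w).2.2.2.2.differentiableAt, fun w ↦ (main w).2.2.2.1.fderiv,
    fun w ↦ (main w).2.2.2.2.fderiv⟩
end
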